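/- arXiv:0911.1900 — 2 statements merged into one kernel-verified Lean document; each statement's English description precedes it below -/
import Mathlib

section
/- Let G=(V,A) be a finite loopless digraph, r ∈ V, T an out-tree of G rooted at r, k a natural number, and x ∈ V(T). Assume that every arc (x,u) ∈ A satisfies either (x,u) ∈ T or u ∉ V(T). If there exists a spanning out-tree T' of G rooted at r with T' ⪰ T, x internal in T', and |leaves(T')| ≥ k, then there exists a spanning out-tree T'' of G rooted at r with T'' ⪰ T, |leaves(T'')| ≥ k, x internal in T'', and every arc of A with tail x belongs to T''. -/
/-!
Starting from a spanning out-tree `T'` extending `T`, let `x` adopt each of its out-neighbours `u`: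
delete the arc of `T'` entering `u` and insert `(x, u)`. No arc of `T` is lost, because either `u`
lies outside `T` or its arc in `T` is already `(x, u)`. In particular the path of `T` from `r` to
`x` survives, so every vertex stays reachable. Only `x` gains out-arcs, and `x` was already
internal, so every leaf of `T'` stays a leaf.
-/

variable {V : Type*} [DecidableEq V] [Fintype V]

/-- The vertex set of an arc set `T` together with the root `r`. -/
def dverts (r : V) (T : Finset (V × V)) : Finset V :=
  insert r (T.image Prod.fst ∪ T.image Prod.snd)

/-- In-degree of `v` in the arc set `T`. -/
def dInDeg (T : Finset (V × V)) (v : V) : ℕ :=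
  (T.filter fun a => a.2 = v).card

/-- Out-degree of `v` in the arc set `T`. -/
def dOutDeg (T : Finset (V × V)) (v : V) : ℕ :=
  (T.filter fun a => a.1 = v).card

/-- Reachability by a directed path using only arcs of `T`. -/
def DReach (T : Finset (V × V)) (x y : V) : Prop :=
  Relation.ReflTransGen (fun a b => (a, b) ∈ T) x y

/-- A loopless arc set. -/
def DLoopless (A : Finset (V × V)) : Prop := ∀ a ∈ A, a.1 ≠ a.2

/-- `T` is an out-tree of the digraph with arc set `A`, rooted at `r`. -/
def IsOutTree (A : Finset (V × V)) (r : V) (T : Finset (V × V)) : Prop :=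
  T ⊆ A ∧ dInDeg T r = 0 ∧ (∀ v ∈ dverts r T, v ≠ r → dInDeg T v = 1) ∧
    ∀ v ∈ dverts r T, DReach T r v

/-- `T` is a spanning out-tree of the digraph with arc set `A`, rooted at `r`. -/
def IsSpanningOutTree (A : Finset (V × V)) (r : V) (T : Finset (V × V)) : Prop :=
  IsOutTree A r T ∧ dverts r T = Finset.univ

/-- The leaves of an out-tree: vertices of out-degree 0. -/
def dleaves (r : V) (T : Finset (V × V)) : Finset V :=
  (dverts r T).filter fun v => dOutDeg T v = 0

section ArcSets

omit [Fintype V]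

variable {T : Finset (V × V)} {r u v p : V}

theorem dInDeg_pos_iff : 0 < dInDeg T v ↔ ∃ p, (p, v) ∈ T := by
  simp [dInDeg, Finset.card_pos, Finset.Nonempty]

theorem dInDeg_eq_zero_iff : dInDeg T v = 0 ↔ ∀ p, (p, v) ∉ T := by
  simpa using (dInDeg_pos_iff (T := T) (v := v)).not

theorem dInDeg_le_one_iff :
    dInDeg T v ≤ 1 ↔ ∀ p q, (p, v) ∈ T → (q, v) ∈ T → p = q := by
  simp only [dInDeg, Finset.card_le_one, Finset.mem_filter, Prod.forall, Prod.mk.injEq]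
  grind

theorem dOutDeg_pos_iff : 0 < dOutDeg T v ↔ ∃ u, (v, u) ∈ T := by
  simp [dOutDeg, Finset.card_pos, Finset.Nonempty]

theorem dOutDeg_eq_zero_iff : dOutDeg T v = 0 ↔ ∀ u, (v, u) ∉ T := by
  simpa using (dOutDeg_pos_iff (T := T) (v := v)).not

theorem root_mem_dverts : r ∈ dverts r T :=
  Finset.mem_insert_self _ _

theorem head_mem_dverts (h : (p, u) ∈ T) : u ∈ dverts r T :=
  Finset.mem_insert_of_mem (Finset.mem_union_right _ (Finset.mem_image_of_mem Prod.snd h))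

theorem DReach.mem_dverts (h : DReach T r v) : v ∈ dverts r T := by
  rcases h.cases_tail with rfl | ⟨_, _, harc⟩
  · exact root_mem_dverts
  · exact head_mem_dverts harc

theorem DReach.dInDeg_pos (h : DReach T r v) (hv : v ≠ r) : 0 < dInDeg T v := by
  obtain rfl | ⟨p, _, harc⟩ := h.cases_tail
  · exact absurd rfl hv
  · exact dInDeg_pos_iff.2 ⟨p, harc⟩

end ArcSets

theorem isSpanningOutTree_iff {A T : Finset (V × V)} {r : V} :
    IsSpanningOutTree A r T ↔
      T ⊆ A ∧ (∀ p, (p, r) ∉ T) ∧ Relator.LeftUnique (fun a b => (a, b) ∈ T) ∧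
        ∀ v, DReach T r v := by
  constructor
  · rintro ⟨⟨hsub, hroot, hin, hreach⟩, hspan⟩
    simp only [hspan, Finset.mem_univ, true_imp_iff] at hin hreach
    rw [dInDeg_eq_zero_iff] at hroot
    refine ⟨hsub, hroot, fun p q v hp hq => ?_, hreach⟩
    have hv : v ≠ r := fun h => hroot p (h ▸ hp)
    exact dInDeg_le_one_iff.1 (hin v hv).le p q hp hq
  · rintro ⟨hsub, hroot, huniq, hreach⟩
    refine ⟨⟨hsub, dInDeg_eq_zero_iff.2 hroot, fun v _ hv => ?_, fun v _ => hreach v⟩,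
      Finset.eq_univ_of_forall fun v => (hreach v).mem_dverts⟩
    exact le_antisymm (dInDeg_le_one_iff.2 fun _ _ hp hq => huniq hp hq)
      ((hreach v).dInDeg_pos hv)

/-- The arc set obtained from `T` when `x` adopts all its out-neighbours in `A`: arcs of `T`
entering an out-neighbour of `x` are deleted, and all arcs of `A` with tail `x` are inserted. -/
def adoptOutNeighbors (A T : Finset (V × V)) (x : V) : Finset (V × V) :=
  (T.filter fun a => (x, a.2) ∉ A) ∪ A.filter fun a => a.1 = x

section Adopt

omit [Fintype V]

variable {A S T : Finset (V × V)} {r u v p x : V}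

theorem mem_adoptOutNeighbors :
    (p, u) ∈ adoptOutNeighbors A T x ↔ (p, u) ∈ T ∧ (x, u) ∉ A ∨ p = x ∧ (x, u) ∈ A := by
  simp only [adoptOutNeighbors, Finset.mem_union, Finset.mem_filter]
  grind

theorem mem_adoptOutNeighbors_of_mem (h : (x, u) ∈ A) : (x, u) ∈ adoptOutNeighbors A T x :=
  mem_adoptOutNeighbors.2 (Or.inr ⟨rfl, h⟩)

theorem adoptOutNeighbors_subset (hTA : T ⊆ A) : adoptOutNeighbors A T x ⊆ A :=
  Finset.union_subset ((Finset.filter_subset _ _).trans hTA) (Finset.filter_subset _ _)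

theorem subset_adoptOutNeighbors (hST : S ⊆ T)
    (huniq : Relator.LeftUnique fun a b => (a, b) ∈ S)
    (hS : ∀ p u, (p, u) ∈ S → (x, u) ∈ A → (x, u) ∈ S) :
    S ⊆ adoptOutNeighbors A T x := by
  rintro ⟨p, u⟩ hpu
  by_cases hxu : (x, u) ∈ A
  · obtain rfl : p = x := huniq hpu (hS p u hpu hxu)
    exact mem_adoptOutNeighbors_of_mem hxu
  · exact mem_adoptOutNeighbors.2 (Or.inl ⟨hST hpu, hxu⟩)

theorem leftUnique_adoptOutNeighbors (huniq : Relator.LeftUnique fun a b => (a, b) ∈ T) :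
    Relator.LeftUnique fun a b => (a, b) ∈ adoptOutNeighbors A T x := by
  intro p q u hp hq
  rcases mem_adoptOutNeighbors.1 hp with ⟨hpT, hxu⟩ | ⟨rfl, hxu⟩ <;>
    rcases mem_adoptOutNeighbors.1 hq with ⟨hqT, hxu'⟩ | ⟨rfl, hxu'⟩
  · exact huniq hpT hqT
  · exact absurd hxu' hxu
  · exact absurd hxu hxu'
  · rfl

theorem DReach.adoptOutNeighbors (hx : DReach (adoptOutNeighbors A T x) r x)
    (hv : DReach T r v) : DReach (adoptOutNeighbors A T x) r v := by
  induction hv with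
  | refl => exact .refl
  | @tail p u _ hpu ih =>
    by_cases hxu : (x, u) ∈ A
    · exact hx.tail (mem_adoptOutNeighbors_of_mem hxu)
    · exact ih.tail (mem_adoptOutNeighbors.2 (Or.inl ⟨hpu, hxu⟩))

theorem dOutDeg_adoptOutNeighbors_pos (hTA : T ⊆ A) (hx : 0 < dOutDeg T x) :
    0 < dOutDeg (adoptOutNeighbors A T x) x := by
  obtain ⟨u, hxu⟩ := dOutDeg_pos_iff.1 hx
  exact dOutDeg_pos_iff.2 ⟨u, mem_adoptOutNeighbors_of_mem (hTA hxu)⟩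

theorem dOutDeg_adoptOutNeighbors_eq_zero (hvx : v ≠ x) (hv : dOutDeg T v = 0) :
    dOutDeg (adoptOutNeighbors A T x) v = 0 := by
  rw [dOutDeg_eq_zero_iff] at hv ⊢
  intro u hvu
  rcases mem_adoptOutNeighbors.1 hvu with ⟨hvT, _⟩ | ⟨hvx', _⟩
  · exact hv u hvT
  · exact hvx hvx'

theorem dleaves_subset_dleaves_adoptOutNeighbors
    (hverts : dverts r T ⊆ dverts r (adoptOutNeighbors A T x)) (hx : 0 < dOutDeg T x) :
    dleaves r T ⊆ dleaves r (adoptOutNeighbors A T x) := by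
  intro v hv
  obtain ⟨hvT, hv0⟩ := Finset.mem_filter.1 hv
  have hvx : v ≠ x := by
    rintro rfl
    exact hx.ne' hv0
  exact Finset.mem_filter.2 ⟨hverts hvT, dOutDeg_adoptOutNeighbors_eq_zero hvx hv0⟩

end Adopt

theorem IsSpanningOutTree.adoptOutNeighbors {A T : Finset (V × V)} {r x : V}
    (hT : IsSpanningOutTree A r T) (hxr : (x, r) ∉ A)
    (hx : DReach (adoptOutNeighbors A T x) r x) :
    IsSpanningOutTree A r (adoptOutNeighbors A T x) := by
  obtain ⟨hsub, hroot, huniq, hreach⟩ := isSpanningOutTree_iff.1 hT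
  refine isSpanningOutTree_iff.2 ⟨adoptOutNeighbors_subset hsub, fun p hp => ?_,
    leftUnique_adoptOutNeighbors huniq, fun v => hx.adoptOutNeighbors (hreach v)⟩
  rcases mem_adoptOutNeighbors.1 hp with ⟨hpT, _⟩ | ⟨_, hxr'⟩
  · exact hroot p hpT
  · exact hxr hxr'

theorem stmt0_general {A T T' : Finset (V × V)} {r x : V}
    (hT' : IsSpanningOutTree A r T') (hTT' : T ⊆ T') (hint : 0 < dOutDeg T' x)
    (hx : DReach T r x) (hinner : ∀ u, (x, u) ∈ A → (x, u) ∈ T ∨ u ∉ dverts r T) :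
    ∃ T'', IsSpanningOutTree A r T'' ∧ T ⊆ T'' ∧ dleaves r T' ⊆ dleaves r T'' ∧
      0 < dOutDeg T'' x ∧ ∀ u, (x, u) ∈ A → (x, u) ∈ T'' := by
  obtain ⟨hsub, hroot, huniq, -⟩ := isSpanningOutTree_iff.1 hT'
  have hxr : (x, r) ∉ A := fun hA => (hinner r hA).elim
    (fun hxT => hroot x (hTT' hxT)) fun hr => hr root_mem_dverts
  have hext : T ⊆ adoptOutNeighbors A T' x :=
    subset_adoptOutNeighbors hTT' (fun _ _ _ hp hq => huniq (hTT' hp) (hTT' hq))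
      fun p u hpu hxu => (hinner u hxu).resolve_right (not_not_intro (head_mem_dverts hpu))
  have hx' : DReach (adoptOutNeighbors A T' x) r x :=
    Relation.ReflTransGen.mono (fun _ _ harc => hext harc) _ _ hx
  have hspan : IsSpanningOutTree A r (adoptOutNeighbors A T' x) :=
    hT'.adoptOutNeighbors hxr hx'
  have hleaves : dleaves r T' ⊆ dleaves r (adoptOutNeighbors A T' x) :=
    dleaves_subset_dleaves_adoptOutNeighbors (hT'.2.trans hspan.2.symm).subset hint
  exact ⟨_, hspan, hext, hleaves, dOutDeg_adoptOutNeighbors_pos hsub hint,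
    fun u => mem_adoptOutNeighbors_of_mem⟩

theorem stmt0 (A T : Finset (V × V)) (r x : V) (k : ℕ)
    (hA : DLoopless A) (hT : IsOutTree A r T) (hx : x ∈ dverts r T)
    (hinner : ∀ u : V, (x, u) ∈ A → (x, u) ∈ T ∨ u ∉ dverts r T)
    (h : ∃ T' : Finset (V × V), IsSpanningOutTree A r T' ∧ T ⊆ T' ∧
      1 ≤ dOutDeg T' x ∧ k ≤ (dleaves r T').card) :
    ∃ T'' : Finset (V × V), IsSpanningOutTree A r T'' ∧ T ⊆ T'' ∧
      k ≤ (dleaves r T'').card ∧ 1 ≤ dOutDeg T'' x ∧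
      ∀ u : V, (x, u) ∈ A → (x, u) ∈ T'' := by
  obtain ⟨T', hT', hTT', hint, hk⟩ := h
  exact (stmt0_general hT' hTT' hint (hT.2.2.2 x hx) hinner).imp
    fun _ ⟨hspan, hext, hleaves, hrest⟩ =>
      ⟨hspan, hext, hk.trans (Finset.card_le_card hleaves), hrest⟩
end

section
/- (Soundness of reduction rule R4.) Let G=(V,A) be a finite loopless digraph, r ∈ V, T an out-tree of G rooted at r, and v ∈ V(T). Then for every out-tree T' of G rooted at r with T' ⪰ T in which v is a leaf, every arc of T' incident to v (having v as head or as tail) belongs to T. -/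
variable {V : Type*} [DecidableEq V] [Fintype V]

/-! In an out-tree the root has in-degree 0 and every other vertex in-degree 1, so passing to a
larger out-tree with the same root leaves the in-degree of every old vertex unchanged: each new arc
has a new vertex as its head. A leaf of the larger tree has no outgoing arcs at all. -/

section

omit [Fintype V]

theorem dverts_mono {T T' : Finset (V × V)} (h : T ⊆ T') (r : V) : dverts r T ⊆ dverts r T' :=
  Finset.insert_subset_insert r
    (Finset.union_subset_union (Finset.image_subset_image h) (Finset.image_subset_image h))

theorem dOutDeg_eq_zero_iff_s6 {T : Finset (V × V)} {v : V} :
    dOutDeg T v = 0 ↔ ∀ a ∈ T, a.1 ≠ v :=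
  Finset.card_eq_zero.trans Finset.filter_eq_empty_iff

theorem mem_of_subset_of_dInDeg_le {T T' : Finset (V × V)} (h : T ⊆ T') {a : V × V}
    (hdeg : dInDeg T' a.2 ≤ dInDeg T a.2) (ha : a ∈ T') : a ∈ T := by
  have hin : (T.filter fun b => b.2 = a.2) = T'.filter fun b => b.2 = a.2 :=
    Finset.eq_of_subset_of_card_le (Finset.filter_subset_filter _ h) hdeg
  have hmem : a ∈ T.filter fun b => b.2 = a.2 := hin.symm ▸ Finset.mem_filter.mpr ⟨ha, rfl⟩
  exact (Finset.mem_filter.mp hmem).1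

namespace IsOutTree

variable {A A' T T' : Finset (V × V)} {r v : V}

theorem dInDeg_eq_ite (hT : IsOutTree A r T) (hv : v ∈ dverts r T) :
    dInDeg T v = if v = r then 0 else 1 := by
  obtain ⟨-, hroot, hnonroot, -⟩ := hT
  split_ifs with hvr
  · exact hvr ▸ hroot
  · exact hnonroot v hv hvr

theorem dInDeg_eq_of_subset (hT : IsOutTree A r T) (hT' : IsOutTree A' r T') (h : T ⊆ T')
    (hv : v ∈ dverts r T) : dInDeg T' v = dInDeg T v :=
  (hT'.dInDeg_eq_ite (dverts_mono h r hv)).trans (hT.dInDeg_eq_ite hv).symm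

theorem mem_of_subset_of_snd_mem_dverts (hT : IsOutTree A r T) (hT' : IsOutTree A' r T')
    (h : T ⊆ T') {a : V × V} (ha : a ∈ T') (hhead : a.2 ∈ dverts r T) : a ∈ T :=
  mem_of_subset_of_dInDeg_le h (hT.dInDeg_eq_of_subset hT' h hhead).le ha

end IsOutTree

theorem stmt6_general {A A' T T' : Finset (V × V)} {r v : V} (hT : IsOutTree A r T)
    (hv : v ∈ dverts r T) (hT' : IsOutTree A' r T') (h : T ⊆ T') (hleaf : dOutDeg T' v = 0) :
    ∀ a ∈ T', (a.1 = v ∨ a.2 = v) → a ∈ T := by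
  rintro a ha (htail | hhead)
  · exact absurd htail (dOutDeg_eq_zero_iff_s6.mp hleaf a ha)
  · exact hT.mem_of_subset_of_snd_mem_dverts hT' h ha (hhead ▸ hv)

end

theorem stmt6 (A T : Finset (V × V)) (r v : V)
    (hA : DLoopless A) (hT : IsOutTree A r T) (hv : v ∈ dverts r T) :
    ∀ T' : Finset (V × V), IsOutTree A r T' → T ⊆ T' → dOutDeg T' v = 0 →
      ∀ a ∈ T', (a.1 = v ∨ a.2 = v) → a ∈ T :=
  fun _ hT' h hleaf => stmt6_general hT hv hT' h hleaf
end
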